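/- Let k ≥ 0 and let 1 ≤ i₁ ≤ i₂ ≤ … ≤ i_{k+1} ≤ m and ℓ ≥ j₁ ≥ j₂ ≥ … ≥ j_{k+1} ≥ m. Then for every permutation σ of {1,…,k+1}, the multiset of colors {(i_a, j_{σ(a)}) : a = 1,…,k+1} is greater than or equal to the multiset {(i_a, j_{k+2−a}) : a = 1,…,k+1} in the order on finite multisets of colors induced by the linear order on colors. In other words, among all multisets of k+1 colors whose multiset of row indices is {i₁,…,i_{k+1}} and whose multiset of column indices is {j₁,…,j_{k+1}}, the minimal one pairs i_a with j_{k+2−a}. -/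

import Mathlib

/-- The elements of a finite multiset over a linearly ordered set, listed in decreasing order. -/
def descList {X : Type*} [LinearOrder X] (M : Multiset X) : List X :=
  (M.sort (· ≤ ·)).reverse

/-- The order on finite multisets over a linearly ordered set: `M < N` iff, listing the
elements of each multiset in decreasing order, either at the first position where the two
lists differ the element of `M` is smaller than that of `N`, or the list of `M` is a proper
initial segment of the list of `N`. -/
def mlt {X : Type*} [LinearOrder X] (M N : Multiset X) : Prop :=
  List.Lex (· < ·) (descList M) (descList N)

/-- `M ≤ N` iff `M < N` or `M = N`. -/
def mle {X : Type*} [LinearOrder X] (M N : Multiset X) : Prop :=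
  mlt M N ∨ M = N

/-- A color is a pair `(i,j)` with `1 ≤ i ≤ m` and `m ≤ j ≤ ℓ`, linearly ordered by
`(i',j') < (i,j)` iff `i' > i`, or (`i' = i` and `j' < j`).  This order is realized by the
strictly monotone injection `colorKey (i,j) = (−i, j)` into `ℤ ×ₗ ℤ` (lexicographic order);
the first conjunct of the theorem below records this. -/
def colorKey (c : ℕ × ℕ) : ℤ ×ₗ ℤ := toLex (-(c.1 : ℤ), (c.2 : ℤ))


theorem lex_count {X : Type*} [LinearOrder X] (l₁ l₂ : List X)
    (h₁ : l₁.Pairwise (fun a b => b ≤ a)) (h₂ : l₂.Pairwise (fun a b => b ≤ a))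
    (h : List.Lex (· < ·) l₁ l₂) :
    ∃ y, l₁.count y < l₂.count y ∧ ∀ z, y < z → l₁.count z = l₂.count z := by
  induction h with
  | @nil b l =>
    refine ⟨b, by simp, fun z hz => ?_⟩
    rw [List.pairwise_cons] at h₂
    symm
    rw [List.count_nil, List.count_eq_zero]
    intro hm
    rcases List.mem_cons.1 hm with rfl | hm
    · exact lt_irrefl _ hz
    · exact absurd (h₂.1 z hm) (not_le.2 hz)
  | @cons a l l' _ ih =>
    rw [List.pairwise_cons] at h₁ h₂
    obtain ⟨y, hy, hz⟩ := ih h₁.2 h₂.2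
    refine ⟨y, ?_, fun z h => ?_⟩
    · rw [List.count_cons, List.count_cons]; omega
    · rw [List.count_cons, List.count_cons, hz z h]
  | @rel a l b l' hab =>
    rw [List.pairwise_cons] at h₁ h₂
    have e1 : ∀ z, b ≤ z → (a :: l).count z = 0 := by
      intro z hz
      rw [List.count_eq_zero]
      intro hm
      rcases List.mem_cons.1 hm with rfl | hm
      · exact absurd hab (not_lt.2 hz)
      · exact absurd (h₁.1 z hm) (not_le.2 (hab.trans_le hz))
    refine ⟨b, by rw [e1 b le_rfl]; simp, fun z hz => ?_⟩
    rw [e1 z hz.le]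
    symm
    rw [List.count_eq_zero]
    intro hm
    rcases List.mem_cons.1 hm with rfl | hm
    · exact lt_irrefl _ hz
    · exact absurd (h₂.1 z hm) (not_le.2 hz)

theorem descList_coe {X : Type*} [LinearOrder X] (M : Multiset X) :
    (descList M : Multiset X) = M := by
  unfold descList
  rw [Multiset.coe_reverse, Multiset.sort_eq]

theorem descList_pairwise {X : Type*} [LinearOrder X] (M : Multiset X) :
    (descList M).Pairwise (fun a b => b ≤ a) := by
  unfold descList
  rw [List.pairwise_reverse]
  exact Multiset.pairwise_sort M _

theorem descList_count {X : Type*} [LinearOrder X] (M : Multiset X) (y : X) :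
    (descList M).count y = M.count y := by
  conv_rhs => rw [← descList_coe M, Multiset.coe_count]

theorem mle_or_count {X : Type*} [LinearOrder X] (M N : Multiset X) :
    mle M N ∨ ∃ y, N.count y < M.count y ∧ ∀ z, y < z → N.count z = M.count z := by
  rcases lt_trichotomy (descList M) (descList N) with h | h | h
  · exact Or.inl (Or.inl h)
  · left; right
    rw [← descList_coe M, h, descList_coe]
  · right
    obtain ⟨y, hy, hz⟩ := lex_count _ _ (descList_pairwise N) (descList_pairwise M) h
    simp only [descList_count] at hy hz
    exact ⟨y, hy, hz⟩

theorem colorKey_lt (c d : ℕ × ℕ) :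
    colorKey c < colorKey d ↔ (d.1 < c.1 ∨ (c.1 = d.1 ∧ c.2 < d.2)) := by
  unfold colorKey
  rw [Prod.Lex.toLex_lt_toLex]
  simp

theorem colorKey_inj : Function.Injective colorKey := by
  intro c d h
  unfold colorKey at h
  have := toLex.injective h
  simp only [Prod.mk.injEq, neg_inj, Nat.cast_inj] at this
  exact Prod.ext this.1 this.2

/-- let `k ≥ 0`, `1 ≤ i₁ ≤ … ≤ i_{k+1} ≤ m` and `ℓ ≥ j₁ ≥ … ≥ j_{k+1} ≥ m`
(encoded 0-based by monotone `i` and antitone `j` on `Fin (k+1)`).  For every permutation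
`σ` of `{1, …, k+1}`, the multiset of colors `{(i_a, j_{σ(a)})}` is greater than or equal to
the multiset `{(i_a, j_{k+2−a})}` in the order on finite multisets of colors induced by the
linear order on colors (0-based, `j_{k+2−a}` is `j` at the reversed index `Fin.rev a`). -/
theorem stmt15 (ℓ m k : ℕ) (hm : 1 ≤ m) (hml : m ≤ ℓ)
    (i j : Fin (k + 1) → ℕ)
    (hi : ∀ a, 1 ≤ i a ∧ i a ≤ m) (hj : ∀ a, m ≤ j a ∧ j a ≤ ℓ)
    (hmono : Monotone i) (hanti : Antitone j)
    (σ : Equiv.Perm (Fin (k + 1))) :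
    (∀ c d : ℕ × ℕ, colorKey c < colorKey d ↔ (d.1 < c.1 ∨ (c.1 = d.1 ∧ c.2 < d.2))) ∧
    mle (Multiset.map (fun a => colorKey (i a, j a.rev)) (Finset.univ : Finset (Fin (k + 1))).val)
        (Multiset.map (fun a => colorKey (i a, j (σ a))) (Finset.univ : Finset (Fin (k + 1))).val) := by
  refine ⟨colorKey_lt, ?_⟩
  rcases mle_or_count
    (Multiset.map (fun a => colorKey (i a, j a.rev)) (Finset.univ : Finset (Fin (k + 1))).val)
    (Multiset.map (fun a => colorKey (i a, j (σ a))) (Finset.univ : Finset (Fin (k + 1))).val)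
    with h | ⟨y, hy, hz⟩
  · exact h
  exfalso
  have hmem := Multiset.count_pos.1 (lt_of_le_of_lt (Nat.zero_le _) hy)
  obtain ⟨a₀, -, rfl⟩ := Multiset.mem_map.1 hmem
  have key : ∀ f : Fin (k + 1) → ℕ × ℕ, ∀ c : ℕ × ℕ,
      Multiset.count (colorKey c) (Multiset.map (fun a => colorKey (f a))
        (Finset.univ : Finset (Fin (k + 1))).val) =
      Multiset.count c (Multiset.map f (Finset.univ : Finset (Fin (k + 1))).val) := by
    intro f c
    rw [← Multiset.count_map_eq_count' colorKey _ colorKey_inj, Multiset.map_map]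
    rfl
  have hz' : ∀ c : ℕ × ℕ, (c.1 < i a₀ ∨ (i a₀ = c.1 ∧ j a₀.rev < c.2)) →
      Multiset.count c (Multiset.map (fun a => (i a, j (σ a))) Finset.univ.val) =
      Multiset.count c (Multiset.map (fun a => (i a, j a.rev)) Finset.univ.val) := by
    intro c hc
    have := hz (colorKey c) ((colorKey_lt _ _).2 hc)
    rwa [key (fun a => (i a, j (σ a))), key (fun a => (i a, j a.rev))] at this
  rw [key (fun a => (i a, j (σ a))), key (fun a => (i a, j a.rev))] at hy
  clear hz
  let S : ℕ × ℕ → Prop := fun c => c.1 ≤ i a₀ ∧ j a₀.rev ≤ c.2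
  have hlt : Multiset.filter S (Multiset.map (fun a => (i a, j (σ a))) Finset.univ.val) <
      Multiset.filter S (Multiset.map (fun a => (i a, j a.rev)) Finset.univ.val) := by
    apply lt_of_le_of_ne
    · rw [Multiset.le_iff_count]
      intro c
      rw [Multiset.count_filter, Multiset.count_filter]
      split_ifs with hc
      · by_cases hc' : c = (i a₀, j a₀.rev)
        · rw [hc']; exact hy.le
        · refine (hz' c ?_).le
          obtain ⟨c1, c2⟩ := c
          simp only [S] at hc
          simp only [Prod.mk.injEq] at hc'
          simp only
          omega
      · exact le_rfl
    · intro he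
      have := congrArg (Multiset.count (i a₀, j a₀.rev)) he
      rw [Multiset.count_filter, Multiset.count_filter] at this
      simp only [S, le_refl, and_self, if_true] at this
      omega
  have hcard := Multiset.card_lt_card hlt
  rw [Multiset.filter_map, Multiset.filter_map, Multiset.card_map, Multiset.card_map] at hcard
  change (Finset.univ.filter (fun a => i a ≤ i a₀ ∧ j a₀.rev ≤ j (σ a))).card <
    (Finset.univ.filter (fun a => i a ≤ i a₀ ∧ j a₀.rev ≤ j a.rev)).card at hcard
  have split : ∀ f : Fin (k + 1) → ℕ,
      (Finset.univ.filter (fun a => i a ≤ i a₀ ∧ j a₀.rev ≤ f a)).card +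
      (Finset.univ.filter (fun a => i a ≤ i a₀ ∧ ¬ j a₀.rev ≤ f a)).card =
      (Finset.univ.filter (fun a => i a ≤ i a₀)).card := by
    intro f
    rw [← Finset.filter_filter, ← Finset.filter_filter]
    exact Finset.card_filter_add_card_filter_not _
  have s1 := split (fun a => j (σ a))
  have s2 := split (fun a => j a.rev)
  have h1 : (Finset.univ.filter (fun a => i a ≤ i a₀ ∧ ¬ j a₀.rev ≤ j (σ a))).card ≤
      (Finset.univ.filter (fun a => ¬ j a₀.rev ≤ j (σ a))).card := by
    apply Finset.card_le_card
    intro a ha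
    simp only [Finset.mem_filter] at ha ⊢
    exact ⟨ha.1, ha.2.2⟩
  have h2 : (Finset.univ.filter (fun a => ¬ j a₀.rev ≤ j (σ a))).card ≤
      (Finset.univ.filter (fun a => i a ≤ i a₀ ∧ ¬ j a₀.rev ≤ j a.rev)).card := by
    apply Finset.card_le_card_of_injOn (fun a => (σ a).rev)
    · intro a ha
      simp only [Finset.coe_filter, Finset.mem_univ, true_and, Set.mem_ofPred_eq,
        Fin.rev_rev] at ha ⊢
      refine ⟨hmono ?_, ha⟩
      by_contra hlt
      apply ha
      apply hanti
      rw [← Fin.rev_rev (σ a), Fin.rev_le_rev]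
      exact (not_le.1 hlt).le
    · intro a _ b _ hab
      exact σ.injective (Fin.rev_injective hab)
  omega
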